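/- Fix real α, β > −1, j ∈ ℕ, γ ∈ ℝ, M > 0, and a sequence M_n ≥ 0 with lim_{n→∞} M_n n^γ = M. Suppose γ < 2(α+2j+1). Let (b_0, …, b_{j+1}) be the unique solution of the triangular linear system Σ_{k=0}^{i} b_k·C(i,k)·(−1)^k·k!·2^k·Γ(α+i+1)/Γ(α+i+k+1) = (i−j)/(α+j+i+1) for i = 0, 1, …, j+1, where C(i,k) is the binomial coefficient. Then lim_{n→∞} Q_n(1 − z²/(2n²))/n^α = Σ_{i=0}^{j+1} b_i·2^i·(z/2)^{2i}·g_{α+2i}(z), uniformly on compact subsets of ℂ. -/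

import Mathlib

open Polynomial Filter

/-- The Jacobi polynomial `P_n^{(α,β)}` as a real polynomial. -/
noncomputable def jacobiP (α β : ℝ) (n : ℕ) : Polynomial ℝ :=
  ∑ k ∈ Finset.range (n + 1),
    Polynomial.C (Real.Gamma (n + α + 1) / (Real.Gamma ((n : ℝ) - k + 1) * Real.Gamma (α + k + 1)) *
        (Real.Gamma (n + β + 1) / (Real.Gamma ((k : ℝ) + 1) * Real.Gamma ((n : ℝ) - k + β + 1)))) *
      (Polynomial.C (2⁻¹ : ℝ) * (Polynomial.X - 1)) ^ k *
      (Polynomial.C (2⁻¹ : ℝ) * (Polynomial.X + 1)) ^ (n - k)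

/-- The squared Jacobi norm `‖P_n^{(α,β)}‖²`. -/
noncomputable def jacobiNormSq (α β : ℝ) (n : ℕ) : ℝ :=
  ∫ x in (-1 : ℝ)..1, (jacobiP α β n).eval x ^ 2 * (1 - x) ^ α * (1 + x) ^ β

/-- The kernel `K_n^{(j,k)}(x,y)`. -/
noncomputable def kernK (α β : ℝ) (j k n : ℕ) (x y : ℝ) : ℝ :=
  ∑ i ∈ Finset.range (n + 1),
    (Polynomial.derivative^[j] (jacobiP α β i)).eval x *
      (Polynomial.derivative^[k] (jacobiP α β i)).eval y / jacobiNormSq α β i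

/-- The kernel `K_n^{(j,0)}(1,·)` as a polynomial. -/
noncomputable def kernKPoly (α β : ℝ) (j n : ℕ) : Polynomial ℝ :=
  ∑ i ∈ Finset.range (n + 1),
    Polynomial.C ((Polynomial.derivative^[j] (jacobiP α β i)).eval 1 / jacobiNormSq α β i) *
      jacobiP α β i

/-- The varying Sobolev inner product `(f,g)_{S,n}` with mass `m`. -/
noncomputable def sobInner (α β : ℝ) (j : ℕ) (m : ℝ) (f g : Polynomial ℝ) : ℝ :=
  (∫ x in (-1 : ℝ)..1, f.eval x * g.eval x * (1 - x) ^ α * (1 + x) ^ β) +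
    m * (Polynomial.derivative^[j] f).eval 1 * (Polynomial.derivative^[j] g).eval 1

/-- The Jacobi–Sobolev orthogonal polynomial `Q_n`. -/
noncomputable def sobQ (α β : ℝ) (j : ℕ) (Ms : ℕ → ℝ) (n : ℕ) : Polynomial ℝ :=
  jacobiP α β n -
    Polynomial.C (Ms n * (Polynomial.derivative^[j] (jacobiP α β n)).eval 1 /
        (1 + Ms n * kernK α β j j (n - 1) 1 1)) *
      kernKPoly α β j (n - 1)

/-- The entire function `g_ν(z) = ∑ (-1)^k (z/2)^{2k}/(k! Γ(k+ν+1))`, so that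
`J_ν(x) = (x/2)^ν g_ν(x)`. -/
noncomputable def besselG (ν : ℝ) (z : ℂ) : ℂ :=
  ∑' k : ℕ, (-1) ^ k / ((Nat.factorial k : ℂ) * Complex.Gamma ((k : ℂ) + (ν : ℂ) + 1)) *
    (z / 2) ^ (2 * k)

/-!
Expand every polynomial in powers of `s = (x - 1) / 2`; for `x = 1 - z² / (2n²)` this is
`s = -(z / 2)² / n²`. The `i`-th coefficient of `P_n` is asymptotic to
`n ^ (2i + α) / (i! Γ(α + i + 1))`, and summing these asymptotics gives those of the coefficients
of the kernel. When `M_n n ^ (2(α + 2j + 1)) → ∞` the `1` in the denominator of `Q_n` is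
negligible, so the mass cancels and the `i`-th coefficient of `P_n` is asymptotically multiplied
by `1 - (α + 2j + 1) / (α + j + i + 1) = (i - j) / (α + j + i + 1)`. The coefficients of order `i`
are dominated by a geometric factor times those of order `0`, so dominated convergence gives
uniform convergence of the power series. The limit series is a combination of shifted Bessel
series: the linear system for `b` says so at `i = 0, …, j + 1`, and after clearing denominators
both sides are polynomials in `i` of degree at most `j + 1`, hence agree for all `i`.
-/

section PochhammerGamma

theorem ascPochhammer_eval_eq_prod_range {R : Type*} [CommSemiring R] (n : ℕ) (x : R) :
    (ascPochhammer R n).eval x = ∏ k ∈ Finset.range n, (x + k) := by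
  induction n with
  | zero => simp
  | succ n ih => rw [ascPochhammer_succ_eval, ih, Finset.prod_range_succ]

theorem gamma_add_natCast {x : ℝ} (hx : 0 < x) (n : ℕ) :
    Real.Gamma (x + n) = (ascPochhammer ℝ n).eval x * Real.Gamma x := by
  induction n with
  | zero => simp
  | succ n ih =>
    rw [Nat.cast_succ, ← add_assoc, Real.Gamma_add_one (by positivity), ih,
      ascPochhammer_succ_eval]
    ring

theorem gamma_natCast_sub_natCast {k m : ℕ} (h : k ≤ m) :
    Real.Gamma ((m : ℝ) - k + 1) = (m - k).factorial := by
  rw [← Nat.cast_sub h, Real.Gamma_nat_eq_factorial]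

theorem ringChoose_eq_ascPochhammer_div (x : ℝ) (k : ℕ) :
    Ring.choose (x + k - 1) k = (ascPochhammer ℝ k).eval x / k.factorial := by
  rw [← Ring.multichoose_eq, eq_div_iff (by positivity), mul_comm, ← nsmul_eq_mul,
    Ring.factorial_nsmul_multichoose_eq_ascPochhammer, ascPochhammer_smeval_eq_eval]

theorem ringChoose_eq_gamma_div {x : ℝ} {k : ℕ} (h : 0 < x - k + 1) :
    Ring.choose x k = Real.Gamma (x + 1) / (k.factorial * Real.Gamma (x - k + 1)) := by
  have hchoose := ringChoose_eq_ascPochhammer_div (x - k + 1) k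
  have hgamma := gamma_add_natCast h k
  rw [show x - k + 1 + k - 1 = x by ring] at hchoose
  rw [show x - k + 1 + k = x + 1 by ring] at hgamma
  rw [hchoose, hgamma, mul_div_mul_right _ _ (Real.Gamma_pos_of_pos h).ne']

theorem sum_neg_one_pow_mul_choose_mul_eval {R : Type*} [CommRing R] (P : R[X]) (m : ℕ) (x : R) :
    ∑ k ∈ Finset.range (m + 1), (-1) ^ k * (m.choose k : R) * P.eval (x + k) =
      (-1) ^ m * (fwdDiff 1)^[m] P.eval x := by
  rw [fwdDiff_iter_eq_sum_shift, Finset.mul_sum]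
  refine Finset.sum_congr rfl fun k hk => ?_
  have hkm : m + (m - k) = 2 * (m - k) + k := by grind
  have hsign : (-1 : R) ^ m * (-1) ^ (m - k) = (-1) ^ k := by
    rw [← pow_add, hkm, pow_add, pow_mul, neg_one_sq, one_pow, one_mul]
  rw [zsmul_eq_mul, ← hsign, nsmul_one]
  push_cast
  ring

theorem sum_neg_one_pow_mul_choose_mul_ascPochhammer (x : ℝ) {m i : ℕ} (hi : i ≤ m) :
    ∑ k ∈ Finset.range (m + 1), (-1) ^ k * (m.choose k : ℝ) * (ascPochhammer ℝ i).eval (x + k) =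
      if i = m then (-1) ^ m * (m.factorial : ℝ) else 0 := by
  rw [sum_neg_one_pow_mul_choose_mul_eval]
  split_ifs with him
  · subst him
    have h := fwdDiff_iter_degree_eq_factorial (ascPochhammer ℝ i)
    rw [ascPochhammer_natDegree, (monic_ascPochhammer ℝ i).leadingCoeff, one_smul] at h
    simp [h]
  · have hdeg : (ascPochhammer ℝ i).natDegree < m := by
      rw [ascPochhammer_natDegree]; omega
    simp [fwdDiff_iter_eq_zero_of_degree_lt hdeg]

end PochhammerGamma

section ExpansionAtOne

/-- The coefficient of `s ^ i` in `p (1 + 2 * s)`, that is, of `((x - 1) / 2) ^ i` in `p x`. -/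
noncomputable def coeffAtOne (i : ℕ) : ℝ[X] →ₗ[ℝ] ℝ :=
  lcoeff ℝ i ∘ₗ (aeval (1 + 2 * X : ℝ[X])).toLinearMap

theorem coeffAtOne_apply (i : ℕ) (p : ℝ[X]) :
    coeffAtOne i p = (aeval (1 + 2 * X : ℝ[X]) p).coeff i := rfl

theorem coeffAtOne_C_mul (i : ℕ) (c : ℝ) (p : ℝ[X]) :
    coeffAtOne i (C c * p) = c * coeffAtOne i p := by
  rw [C_mul', map_smul, smul_eq_mul]

theorem eval_aeval_one_add_two_mul (p : ℝ[X]) (t : ℝ) :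
    (aeval (1 + 2 * X : ℝ[X]) p).eval t = p.eval (1 + 2 * t) := by
  rw [← comp_eq_aeval, eval_comp]
  simp

theorem hasSum_coeff_mul_pow (p : ℝ[X]) (s : ℂ) :
    HasSum (fun i => (p.coeff i : ℂ) * s ^ i) (aeval s p) := by
  rw [aeval_eq_sum_range]
  simp only [Complex.real_smul]
  refine hasSum_sum_of_ne_finset_zero fun i hi => ?_
  rw [coeff_eq_zero_of_natDegree_lt (by simpa using hi), Complex.ofReal_zero, zero_mul]

theorem hasSum_coeffAtOne_mul_pow (p : ℝ[X]) (s : ℂ) :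
    HasSum (fun i => (coeffAtOne i p : ℂ) * s ^ i) (aeval (1 + 2 * s) p) := by
  have h : aeval s (aeval (1 + 2 * X : ℝ[X]) p) = aeval (1 + 2 * s) p := by
    rw [← aeval_algHom_apply]
    simp only [map_add, map_one, map_mul, map_ofNat, aeval_X]
  exact h ▸ hasSum_coeff_mul_pow (aeval (1 + 2 * X : ℝ[X]) p) s

theorem coeffAtOne_eq_taylor_coeff (i : ℕ) (p : ℝ[X]) :
    coeffAtOne i p = (taylor 1 p).coeff i * 2 ^ i := by
  have h : aeval (1 + 2 * X : ℝ[X]) p = (taylor 1 p).comp (C 2 * X) := by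
    rw [taylor_apply, comp_assoc, ← comp_eq_aeval]
    simp [add_comm, map_ofNat C]
  rw [coeffAtOne_apply, h, comp_C_mul_X_coeff]

theorem eval_one_iterate_derivative (j : ℕ) (p : ℝ[X]) :
    (derivative^[j] p).eval 1 = j.factorial / 2 ^ j * coeffAtOne j p := by
  rw [coeffAtOne_eq_taylor_coeff, taylor_coeff, ← factorial_smul_hasseDeriv]
  simp
  field_simp

end ExpansionAtOne

section JacobiCoefficients

/-- The coefficient of `(-(z / 2) ^ 2) ^ i` in the power series of `besselG ν z`. -/
noncomputable def besselCoeff (ν : ℝ) (i : ℕ) : ℝ :=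
  1 / (i.factorial * Real.Gamma (ν + i + 1))

theorem besselCoeff_pos {ν : ℝ} (hν : -1 < ν) (i : ℕ) : 0 < besselCoeff ν i := by
  have : 0 < Real.Gamma (ν + i + 1) := Real.Gamma_pos_of_pos (by linarith [i.cast_nonneg (α := ℝ)])
  rw [besselCoeff]
  positivity

/-- The coefficient of `((x - 1) / 2) ^ i` in `P_m^{(α,β)}(x)`; see `coeffAtOne_jacobiP`. -/
noncomputable def jacobiCoeff (α β : ℝ) (m i : ℕ) : ℝ :=
  Real.Gamma (m + α + 1) / m.factorial * m.descFactorial i *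
    (ascPochhammer ℝ i).eval (m + α + β + 1) * besselCoeff α i

theorem jacobiCoeff_eq_zero (α β : ℝ) {m i : ℕ} (h : m < i) : jacobiCoeff α β m i = 0 := by
  simp [jacobiCoeff, Nat.descFactorial_of_lt h]

/-- The weight of `((x - 1) / 2) ^ k * ((x + 1) / 2) ^ (m - k)` in `P_m^{(α,β)}(x)`. -/
noncomputable def jacobiWeight (α β : ℝ) (m k : ℕ) : ℝ :=
  Ring.choose (m + α) (m - k) * Ring.choose (m + β) k

variable {α β : ℝ}

theorem jacobiWeight_eq_gamma (hα : -1 < α) (hβ : -1 < β) {m k : ℕ} (hk : k ≤ m) :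
    jacobiWeight α β m k =
      Real.Gamma (m + α + 1) / (Real.Gamma ((m : ℝ) - k + 1) * Real.Gamma (α + k + 1)) *
        (Real.Gamma (m + β + 1) /
          (Real.Gamma ((k : ℝ) + 1) * Real.Gamma ((m : ℝ) - k + β + 1))) := by
  have hkm : (k : ℝ) ≤ m := Nat.cast_le.2 hk
  have hα' : (m : ℝ) + α - (m - k : ℕ) + 1 = α + k + 1 := by push_cast [hk]; ring
  have hβ' : (m : ℝ) + β - k + 1 = m - k + β + 1 := by ring
  rw [jacobiWeight, ringChoose_eq_gamma_div (by rw [hα']; linarith [k.cast_nonneg (α := ℝ)]),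
    ringChoose_eq_gamma_div (by linarith), hα', hβ', gamma_natCast_sub_natCast hk,
    Real.Gamma_nat_eq_factorial]

theorem jacobiP_comp_eq_sum (hα : -1 < α) (hβ : -1 < β) (m : ℕ) :
    aeval (1 + 2 * X : ℝ[X]) (jacobiP α β m) = ∑ k ∈ Finset.range (m + 1),
      C (jacobiWeight α β m k) * (X ^ k * (X + 1) ^ (m - k)) := by
  have hC : (C (2⁻¹ : ℝ) * 2 : ℝ[X]) = 1 := by
    rw [← map_ofNat C 2, ← C_mul, inv_mul_cancel₀ two_ne_zero, C_1]
  have hsub : C (2⁻¹ : ℝ) * (1 + 2 * X - 1) = X := by linear_combination X * hC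
  have hadd : C (2⁻¹ : ℝ) * (1 + 2 * X + 1) = X + 1 := by linear_combination (X + 1) * hC
  rw [jacobiP, map_sum]
  refine Finset.sum_congr rfl fun k hk => ?_
  rw [jacobiWeight_eq_gamma hα hβ (Finset.mem_range_succ_iff.1 hk)]
  simp only [map_mul, map_pow, map_sub, map_add, map_one, aeval_C, aeval_X, algebraMap_eq,
    hsub, hadd, mul_assoc]

theorem coeffAtOne_jacobiP_eq_sum (hα : -1 < α) (hβ : -1 < β) {m i : ℕ} (hi : i ≤ m) :
    coeffAtOne i (jacobiP α β m) =
      ∑ k ∈ Finset.range (i + 1), jacobiWeight α β m k * (m - k).choose (i - k) := by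
  have hsub : Finset.range (i + 1) ⊆ Finset.range (m + 1) := by simpa using hi
  rw [coeffAtOne_apply, jacobiP_comp_eq_sum hα hβ, finsetSum_coeff,
    ← Finset.sum_subset hsub fun k _ hk => ?_]
  · refine Finset.sum_congr rfl fun k hk => ?_
    rw [coeff_C_mul, coeff_X_pow_mul', if_pos (Finset.mem_range_succ_iff.1 hk),
      coeff_X_add_one_pow]
  · rw [coeff_C_mul, coeff_X_pow_mul', if_neg (by simpa using hk), mul_zero]

theorem jacobiWeight_mul_choose (α β : ℝ) {m i k : ℕ} (hk : k ≤ i) (hi : i ≤ m) :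
    jacobiWeight α β m k * (m - k).choose (i - k) =
      Ring.choose (m + α) (m - i) * (Ring.choose (m + β) k * Ring.choose (α + i) (i - k)) := by
  have h := Ring.choose_smul_choose ((m : ℝ) + α) (show m - i ≤ m - k by omega)
  rw [nsmul_eq_mul, ← Nat.choose_symm (by omega), show m - k - (m - i) = i - k by omega,
    Nat.cast_sub hi, show (m : ℝ) + α - (m - i) = α + i by ring] at h
  rw [jacobiWeight, mul_right_comm, mul_comm (Ring.choose _ (m - k)), h]
  ring

theorem coeffAtOne_jacobiP (hα : -1 < α) (hβ : -1 < β) (m i : ℕ) :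
    coeffAtOne i (jacobiP α β m) = jacobiCoeff α β m i := by
  rcases le_or_gt i m with hi | hi
  · have hvandermonde := Ring.add_choose_eq i (Commute.all ((m : ℝ) + β) (α + i))
    rw [Finset.Nat.sum_antidiagonal_eq_sum_range_succ_mk,
      show (m : ℝ) + β + (α + i) = m + α + β + 1 + i - 1 by ring,
      ringChoose_eq_ascPochhammer_div] at hvandermonde
    have hα' : (m : ℝ) + α - (m - i : ℕ) + 1 = α + i + 1 := by push_cast [hi]; ring
    have hfactorial : ((m - i).factorial : ℝ) * m.descFactorial i = m.factorial := by
      exact_mod_cast Nat.factorial_mul_descFactorial hi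
    rw [coeffAtOne_jacobiP_eq_sum hα hβ hi, Finset.sum_congr rfl fun k hk =>
        jacobiWeight_mul_choose α β (Finset.mem_range_succ_iff.1 hk) hi,
      ← Finset.mul_sum, ← hvandermonde, jacobiCoeff, besselCoeff, ← hfactorial,
      ringChoose_eq_gamma_div (by rw [hα']; linarith [i.cast_nonneg (α := ℝ)]), hα']
    have : (m.descFactorial i : ℝ) ≠ 0 := by
      exact_mod_cast (Nat.descFactorial_pos.2 hi).ne'
    field_simp
  · rw [coeffAtOne_apply, jacobiP_comp_eq_sum hα hβ, finsetSum_coeff, jacobiCoeff_eq_zero α β hi]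
    refine Finset.sum_eq_zero fun k hk => ?_
    rw [coeff_C_mul, coeff_X_pow_mul', coeff_X_add_one_pow]
    split_ifs
    · rw [Nat.choose_eq_zero_of_lt (by grind), Nat.cast_zero, mul_zero]
    · rw [mul_zero]

end JacobiCoefficients

section JacobiNorm

theorem beta_integrand_coe {a b t : ℝ} (ht : t ∈ Set.uIoc 0 1) :
    (t : ℂ) ^ (((a + 1 : ℝ) : ℂ) - 1) * (1 - (t : ℂ)) ^ (((b + 1 : ℝ) : ℂ) - 1) =
      ((t ^ a * (1 - t) ^ b : ℝ) : ℂ) := by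
  rw [Set.uIoc_of_le zero_le_one] at ht
  rw [Complex.ofReal_mul, Complex.ofReal_cpow ht.1.le, Complex.ofReal_cpow (by linarith [ht.2])]
  push_cast
  simp only [add_sub_cancel_right]

theorem intervalIntegrable_rpow_mul_one_sub_rpow {a b : ℝ} (ha : -1 < a) (hb : -1 < b) :
    IntervalIntegrable (fun t : ℝ => t ^ a * (1 - t) ^ b) MeasureTheory.volume 0 1 := by
  have h := (Complex.betaIntegral_convergent (u := (a + 1 : ℝ)) (v := (b + 1 : ℝ))
    (by simpa using by linarith) (by simpa using by linarith)).congr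
      fun t ht => beta_integrand_coe ht
  rw [intervalIntegrable_iff] at h ⊢
  exact h.re

theorem integral_rpow_mul_one_sub_rpow {a b : ℝ} (ha : -1 < a) (hb : -1 < b) :
    ∫ t in (0 : ℝ)..1, t ^ a * (1 - t) ^ b =
      Real.Gamma (a + 1) * Real.Gamma (b + 1) / Real.Gamma (a + b + 2) := by
  have h := ProbabilityTheory.beta_eq_betaIntegralReal (a + 1) (b + 1) (by linarith) (by linarith)
  rw [ProbabilityTheory.beta, Complex.betaIntegral, intervalIntegral.integral_congr_ae
      (Eventually.of_forall fun t ht => beta_integrand_coe ht),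
    intervalIntegral.integral_ofReal, Complex.ofReal_re] at h
  rw [← h, show a + 1 + (b + 1) = a + b + 2 by ring]

variable {α β : ℝ}

theorem jacobiP_eval_one_sub_two_mul (hα : -1 < α) (hβ : -1 < β) (m : ℕ) (t : ℝ) :
    (jacobiP α β m).eval (1 - 2 * t) = ∑ k ∈ Finset.range (m + 1),
      (-1) ^ k * jacobiWeight α β m k * (t ^ k * (1 - t) ^ (m - k)) := by
  rw [sub_eq_add_neg, ← mul_neg, ← eval_aeval_one_add_two_mul,
    jacobiP_comp_eq_sum hα hβ, eval_finsetSum]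
  refine Finset.sum_congr rfl fun k _ => ?_
  simp only [eval_mul, eval_C, eval_pow, eval_X, eval_add, eval_one]
  rw [neg_pow, neg_add_eq_sub]
  ring

theorem jacobiP_eval_eq_sum_jacobiCoeff (hα : -1 < α) (hβ : -1 < β) (m : ℕ) (t : ℝ) :
    (jacobiP α β m).eval (1 - 2 * t) = ∑ i ∈ Finset.range (m + 1),
      (-1) ^ i * jacobiCoeff α β m i * t ^ i := by
  have hdeg : (aeval (1 + 2 * X : ℝ[X]) (jacobiP α β m)).natDegree < m + 1 :=
    Nat.lt_succ_of_le <| natDegree_le_iff_coeff_eq_zero.2 fun i hi => by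
      rw [← coeffAtOne_apply, coeffAtOne_jacobiP hα hβ, jacobiCoeff_eq_zero α β hi]
  rw [sub_eq_add_neg, ← mul_neg, ← eval_aeval_one_add_two_mul, eval_eq_sum_range' hdeg]
  refine Finset.sum_congr rfl fun i _ => ?_
  rw [← coeffAtOne_apply, coeffAtOne_jacobiP hα hβ, neg_pow]
  ring

theorem jacobiWeight_mul_beta (hα : -1 < α) (hβ : -1 < β) {m k : ℕ} (hk : k ≤ m) (i : ℕ) :
    jacobiWeight α β m k * (Real.Gamma (α + (k + i : ℕ) + 1) * Real.Gamma (β + (m - k : ℕ) + 1) /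
        Real.Gamma (α + (k + i : ℕ) + (β + (m - k : ℕ)) + 2)) =
      Real.Gamma (m + α + 1) * Real.Gamma (m + β + 1) /
          (m.factorial * Real.Gamma (α + β + m + i + 2)) *
        (m.choose k * (ascPochhammer ℝ i).eval (α + 1 + k)) := by
  have hkm : (k : ℝ) ≤ m := Nat.cast_le.2 hk
  have hasc := gamma_add_natCast (show 0 < α + 1 + k by linarith) i
  rw [jacobiWeight_eq_gamma hα hβ hk, Nat.cast_choose ℝ hk, gamma_natCast_sub_natCast hk,
    Real.Gamma_nat_eq_factorial]
  push_cast [hk]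
  rw [show α + (k + i) + 1 = α + 1 + k + i by ring, hasc,
    show α + k + 1 = α + 1 + k by ring, show β + (m - k : ℝ) + 1 = m - k + β + 1 by ring,
    show α + (k + i) + (β + (m - k : ℝ)) + 2 = α + β + m + i + 2 by ring]
  have h₁ := (Real.Gamma_pos_of_pos (show 0 < α + 1 + k by linarith)).ne'
  have h₂ := (Real.Gamma_pos_of_pos (show 0 < (m : ℝ) - k + β + 1 by linarith)).ne'
  have h₃ := (Real.Gamma_pos_of_pos (show 0 < α + β + m + i + 2 by linarith)).ne'
  field_simp

theorem integral_pow_mul_jacobiP (hα : -1 < α) (hβ : -1 < β) {m i : ℕ} (hi : i ≤ m) :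
    ∫ t in (0 : ℝ)..1, t ^ i * (jacobiP α β m).eval (1 - 2 * t) * (t ^ α * (1 - t) ^ β) =
      if i = m then (-1) ^ m * (Real.Gamma (m + α + 1) * Real.Gamma (m + β + 1) /
        Real.Gamma (α + β + 2 * m + 2)) else 0 := by
  have hexpand : ∀ t ∈ Set.Ioo (0 : ℝ) 1,
      t ^ i * (jacobiP α β m).eval (1 - 2 * t) * (t ^ α * (1 - t) ^ β) =
        ∑ k ∈ Finset.range (m + 1), (-1) ^ k * jacobiWeight α β m k *
          (t ^ (α + (k + i : ℕ)) * (1 - t) ^ (β + (m - k : ℕ))) := by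
    intro t ht
    rw [jacobiP_eval_one_sub_two_mul hα hβ, Finset.mul_sum, Finset.sum_mul]
    refine Finset.sum_congr rfl fun k _ => ?_
    rw [Real.rpow_add_natCast ht.1.ne', Real.rpow_add_natCast (sub_pos.2 ht.2).ne', pow_add]
    ring
  have hexp : ∀ (a : ℝ) (l : ℕ), -1 < a → -1 < a + l := fun a l ha => by
    linarith [l.cast_nonneg (α := ℝ)]
  rw [intervalIntegral.integral_congr_Ioo_of_le zero_le_one hexpand,
    intervalIntegral.integral_finsetSum fun k _ =>
      (intervalIntegrable_rpow_mul_one_sub_rpow (hexp _ _ hα) (hexp _ _ hβ)).const_mul _]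
  calc
    _ = ∑ k ∈ Finset.range (m + 1), Real.Gamma (m + α + 1) * Real.Gamma (m + β + 1) /
          (m.factorial * Real.Gamma (α + β + m + i + 2)) *
        ((-1) ^ k * m.choose k * (ascPochhammer ℝ i).eval (α + 1 + k)) := by
      refine Finset.sum_congr rfl fun k hk => ?_
      rw [intervalIntegral.integral_const_mul, integral_rpow_mul_one_sub_rpow (hexp _ _ hα)
        (hexp _ _ hβ), mul_assoc, jacobiWeight_mul_beta hα hβ (Finset.mem_range_succ_iff.1 hk)]
      ring
    _ = _ := by
      rw [← Finset.mul_sum, sum_neg_one_pow_mul_choose_mul_ascPochhammer _ hi]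
      split_ifs with him
      · rw [him, show α + β + m + m + 2 = α + β + 2 * m + 2 by ring]
        field_simp
      · rw [mul_zero]

theorem jacobiNormSq_eq_integral (α β : ℝ) (m : ℕ) :
    jacobiNormSq α β m = 2 ^ (α + β + 1) * ∫ t in (0 : ℝ)..1,
      (jacobiP α β m).eval (1 - 2 * t) ^ 2 * (t ^ α * (1 - t) ^ β) := by
  let f : ℝ → ℝ := fun x => (jacobiP α β m).eval x ^ 2 * (1 - x) ^ α * (1 + x) ^ β
  have hsubst : 2 * ∫ t in (0 : ℝ)..1, f (1 - 2 * t) = jacobiNormSq α β m := by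
    rw [intervalIntegral.mul_integral_comp_sub_mul]
    norm_num [f, jacobiNormSq]
  rw [← hsubst, Real.rpow_add_one two_ne_zero, mul_comm _ (2 : ℝ), mul_assoc]
  congr 1
  rw [← intervalIntegral.integral_const_mul]
  refine intervalIntegral.integral_congr fun t ht => ?_
  rw [Set.uIcc_of_le zero_le_one] at ht
  simp only [f]
  rw [sub_sub_cancel, show 1 + (1 - 2 * t) = 2 * (1 - t) by ring, Real.mul_rpow zero_le_two ht.1,
    Real.mul_rpow zero_le_two (sub_nonneg.2 ht.2), Real.rpow_add two_pos]
  ring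

theorem jacobiNormSq_eq (hα : -1 < α) (hβ : -1 < β) (m : ℕ) :
    jacobiNormSq α β m = 2 ^ (α + β + 1) * (jacobiCoeff α β m m *
      (Real.Gamma (m + α + 1) * Real.Gamma (m + β + 1) / Real.Gamma (α + β + 2 * m + 2))) := by
  have hexpand : ∀ t : ℝ, (jacobiP α β m).eval (1 - 2 * t) ^ 2 * (t ^ α * (1 - t) ^ β) =
      ∑ i ∈ Finset.range (m + 1), (-1) ^ i * jacobiCoeff α β m i *
        (t ^ i * (jacobiP α β m).eval (1 - 2 * t) * (t ^ α * (1 - t) ^ β)) := by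
    intro t
    rw [sq]
    nth_rw 1 [jacobiP_eval_eq_sum_jacobiCoeff hα hβ]
    rw [Finset.sum_mul, Finset.sum_mul]
    exact Finset.sum_congr rfl fun i _ => by ring
  have hint : ∀ i : ℕ, IntervalIntegrable
      (fun t : ℝ => t ^ i * (jacobiP α β m).eval (1 - 2 * t) * (t ^ α * (1 - t) ^ β))
      MeasureTheory.volume 0 1 := fun i =>
    (intervalIntegrable_rpow_mul_one_sub_rpow hα hβ).continuousOn_mul <|
      ((continuous_pow i).mul ((jacobiP α β m).continuous.comp (by fun_prop))).continuousOn
  rw [jacobiNormSq_eq_integral, intervalIntegral.integral_congr fun t _ => hexpand t,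
    intervalIntegral.integral_finsetSum fun i _ => (hint i).const_mul _,
    Finset.sum_eq_single_of_mem m (Finset.self_mem_range_succ m)]
  · rw [intervalIntegral.integral_const_mul, integral_pow_mul_jacobiP hα hβ le_rfl, if_pos rfl]
    congr 1
    rw [mul_mul_mul_comm, ← sq, ← pow_mul, mul_comm m, pow_mul, neg_one_sq, one_pow, one_mul]
  · intro i hi him
    rw [intervalIntegral.integral_const_mul, integral_pow_mul_jacobiP hα hβ
      (Finset.mem_range_succ_iff.1 hi), if_neg him, mul_zero]

end JacobiNorm

section Asymptotics

open Asymptotics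

theorem natCast_rpow_two_mul_add {n : ℕ} (hn : 0 < n) (i : ℕ) (a : ℝ) :
    (n : ℝ) ^ (2 * i + a) = (n ^ 2) ^ i * (n : ℝ) ^ a := by
  rw [Real.rpow_add (Nat.cast_pos.2 hn), ← pow_mul, ← Real.rpow_natCast]
  push_cast
  rfl

theorem natCast_add_isEquivalent (c : ℝ) :
    (fun n : ℕ => (n : ℝ) + c) ~[atTop] fun n : ℕ => (n : ℝ) :=
  IsEquivalent.refl.add_isLittleO <|
    (isLittleO_const_id_atTop c).comp_tendsto tendsto_natCast_atTop_atTop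

theorem ascPochhammer_eval_natCast_add_isEquivalent (c : ℝ) (i : ℕ) :
    (fun n : ℕ => (ascPochhammer ℝ i).eval (n + c)) ~[atTop] fun n : ℕ => (n : ℝ) ^ i := by
  have h := (isEquivalent_atTop_lead (ascPochhammer ℝ i)).comp_tendsto
    (tendsto_natCast_atTop_atTop.atTop_add (tendsto_const_nhds (x := c)))
  rw [(monic_ascPochhammer ℝ i).leadingCoeff, ascPochhammer_natDegree] at h
  simp only [Function.comp_def, one_mul] at h
  exact h.trans ((natCast_add_isEquivalent c).pow i)

theorem gamma_natCast_add_div_factorial_isEquivalent {a : ℝ} (ha : -1 < a) :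
    (fun n : ℕ => Real.Gamma (n + a + 1) / n.factorial) ~[atTop] fun n : ℕ => (n : ℝ) ^ a := by
  have hΓ : 0 < Real.Gamma (a + 1) := Real.Gamma_pos_of_pos (by linarith)
  have hseq : Real.GammaSeq (a + 1) ~[atTop] fun _ => Real.Gamma (a + 1) :=
    (isEquivalent_const_iff_tendsto hΓ.ne').2 (Real.GammaSeq_tendsto_Gamma (a + 1))
  have hprod : ∀ n : ℕ, ∏ k ∈ Finset.range (n + 1), (a + 1 + (k : ℝ)) =
      (n + a + 1) * Real.Gamma (n + a + 1) / Real.Gamma (a + 1) := fun n => by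
    have h := gamma_add_natCast (show 0 < a + 1 by linarith) (n + 1)
    rw [ascPochhammer_eval_eq_prod_range] at h
    rw [eq_div_iff hΓ.ne', ← h, ← Real.Gamma_add_one (by linarith [n.cast_nonneg (α := ℝ)])]
    push_cast
    ring_nf
  have h := ((IsEquivalent.refl (u := fun n : ℕ => Real.Gamma (a + 1) * (n : ℝ) ^ (a + 1))).div
    hseq).div (natCast_add_isEquivalent (a + 1))
  refine (h.congr_left ?_).congr_right ?_ <;>
    filter_upwards [eventually_gt_atTop 0] with n hn
  all_goals
    have hn0 : (0 : ℝ) < n := Nat.cast_pos.2 hn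
    simp only [Pi.div_apply]
    rw [Real.rpow_add_one hn0.ne']
  · have hn1 : 0 < (n : ℝ) + a + 1 := by linarith
    rw [Real.GammaSeq, hprod, Real.rpow_add_one hn0.ne', ← add_assoc]
    field_simp
  · field_simp

theorem sum_gamma_natCast_add_div_factorial {p : ℝ} (hp : -1 < p) (n : ℕ) :
    ∑ m ∈ Finset.range n, Real.Gamma (m + p + 1) / m.factorial =
      n * (Real.Gamma (n + p + 1) / n.factorial) / (p + 1) := by
  have hp' : p + 1 ≠ 0 := by linarith
  induction n with
  | zero => simp
  | succ n ih =>
    have hn : (n : ℝ) + p + 1 ≠ 0 := by linarith [n.cast_nonneg (α := ℝ)]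
    rw [Finset.sum_range_succ, ih, Nat.factorial_succ,
      show ((n + 1 : ℕ) : ℝ) + p + 1 = n + p + 1 + 1 by push_cast; ring, Real.Gamma_add_one hn]
    push_cast
    field_simp
    ring

theorem isEquivalent_sum_range {f g : ℕ → ℝ} (hfg : f ~[atTop] g) (hg : 0 ≤ g)
    (hsum : Tendsto (fun n => ∑ m ∈ Finset.range n, g m) atTop atTop) :
    (fun n => ∑ m ∈ Finset.range n, f m) ~[atTop] fun n => ∑ m ∈ Finset.range n, g m :=
  (hfg.isLittleO.sum_range hg hsum).congr_left fun n => by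
    simp only [Pi.sub_apply, Finset.sum_sub_distrib]

theorem tendsto_const_mul_natCast_rpow_atTop {c p : ℝ} (hc : 0 < c) (hp : 0 < p) :
    Tendsto (fun n : ℕ => c * (n : ℝ) ^ p) atTop atTop :=
  ((tendsto_rpow_atTop hp).comp tendsto_natCast_atTop_atTop).const_mul_atTop hc

theorem sum_range_isEquivalent_rpow {f : ℕ → ℝ} {c p : ℝ} (hc : 0 < c) (hp : -1 < p)
    (hf : f ~[atTop] fun m : ℕ => c * (m : ℝ) ^ p) :
    (fun n => ∑ m ∈ Finset.range n, f m) ~[atTop]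
      fun n : ℕ => c / (p + 1) * (n : ℝ) ^ (p + 1) := by
  -- The sums of `w`, which is equivalent to `m ^ p`, telescope.
  let w : ℕ → ℝ := fun m => Real.Gamma (m + p + 1) / m.factorial
  have hw : w ~[atTop] fun m : ℕ => (m : ℝ) ^ p := gamma_natCast_add_div_factorial_isEquivalent hp
  have hwsum : (fun n => ∑ m ∈ Finset.range n, c * w m) ~[atTop]
      fun n : ℕ => c / (p + 1) * (n : ℝ) ^ (p + 1) := by
    refine ((IsEquivalent.refl (u := fun n : ℕ => c * n / (p + 1))).mul hw).congr_left ?_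
      |>.congr_right ?_
    · refine Eventually.of_forall fun n => ?_
      simp only [Pi.mul_apply, w]
      rw [← Finset.mul_sum, sum_gamma_natCast_add_div_factorial hp]
      ring
    · filter_upwards [eventually_gt_atTop 0] with n hn
      rw [Real.rpow_add_one (by positivity), Pi.mul_apply]
      ring
  have htop := hwsum.symm.tendsto_atTop
    (tendsto_const_mul_natCast_rpow_atTop (div_pos hc (by linarith)) (by linarith))
  refine (isEquivalent_sum_range (hf.trans (IsEquivalent.refl.mul hw.symm)) (fun m => ?_)
    htop).trans hwsum
  have : 0 ≤ Real.Gamma (m + p + 1) :=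
    (Real.Gamma_pos_of_pos (by linarith [m.cast_nonneg (α := ℝ)])).le
  simp only [Pi.zero_apply, Pi.mul_apply, w]
  positivity

end Asymptotics

section JacobiAsymptotics

open Asymptotics

variable {α β : ℝ}

theorem jacobiCoeff_isEquivalent (hα : -1 < α) (β : ℝ) (i : ℕ) :
    (fun m => jacobiCoeff α β m i) ~[atTop]
      fun m : ℕ => besselCoeff α i * (m : ℝ) ^ (2 * i + α) := by
  refine ((((gamma_natCast_add_div_factorial_isEquivalent hα).mul
    (isEquivalent_descFactorial i)).mul (ascPochhammer_eval_natCast_add_isEquivalent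
      (α + β + 1) i)).mul (IsEquivalent.refl (u := fun _ => besselCoeff α i))).congr_left ?_
      |>.congr_right ?_
  · refine Eventually.of_forall fun m => ?_
    simp only [Pi.mul_apply, jacobiCoeff, add_assoc]
  · filter_upwards [eventually_gt_atTop 0] with m hm
    have hexp : (2 * i + α : ℝ) = α + (i + i : ℕ) := by push_cast; ring
    simp only [Pi.mul_apply]
    rw [hexp, Real.rpow_add_natCast (by positivity), pow_add]
    ring

theorem jacobiNormSq_eq_of_pos (hα : -1 < α) (hβ : -1 < β) {m : ℕ} (hm : 0 < m) :
    jacobiNormSq α β m = 2 ^ (α + β + 1) * (Real.Gamma (m + α + 1) * Real.Gamma (m + β + 1) /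
      (m.factorial * Real.Gamma (m + α + β + 1) * (2 * m + α + β + 1))) := by
  have hm1 : (1 : ℝ) ≤ m := Nat.one_le_cast.2 hm
  have hpos : 0 < (m : ℝ) + α + β + 1 := by linarith
  have hpos' : 0 < α + β + 2 * m + 1 := by linarith
  have hasc := gamma_add_natCast hpos m
  have hΓ : Real.Gamma (α + β + 2 * m + 2) = (α + β + 2 * m + 1) *
      ((ascPochhammer ℝ m).eval (m + α + β + 1) * Real.Gamma (m + α + β + 1)) := by
    rw [← hasc, show α + β + 2 * m + 2 = α + β + 2 * m + 1 + 1 by ring,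
      Real.Gamma_add_one hpos'.ne']
    ring_nf
  have h₁ := (Real.Gamma_pos_of_pos hpos).ne'
  have h₂ := (Real.Gamma_pos_of_pos (show 0 < α + m + 1 by linarith)).ne'
  have h₃ := (ascPochhammer_pos m _ hpos).ne'
  rw [jacobiNormSq_eq hα hβ, hΓ, jacobiCoeff, besselCoeff, Nat.descFactorial_self,
    show (m : ℝ) + α + 1 = α + m + 1 by ring,
    show 2 * (m : ℝ) + α + β + 1 = α + β + 2 * m + 1 by ring]
  field_simp

theorem jacobiNormSq_isEquivalent (hα : -1 < α) (hβ : -1 < β) :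
    jacobiNormSq α β ~[atTop] fun m : ℕ => 2 ^ (α + β) * (m : ℝ)⁻¹ := by
  have h := ((gamma_natCast_add_div_factorial_isEquivalent hα).mul
    (gamma_natCast_add_div_factorial_isEquivalent hβ)).div
      (gamma_natCast_add_div_factorial_isEquivalent (show -1 < α + β + 1 by linarith))
  have hratio := (natCast_add_isEquivalent (α + β + 1)).div
    (natCast_add_isEquivalent ((α + β + 1) / 2))
  refine ((IsEquivalent.refl (u := fun _ => (2 : ℝ) ^ (α + β))).mul (h.mul hratio)).congr_left ?_
    |>.congr_right ?_ <;> filter_upwards [eventually_gt_atTop 0] with m hm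
  all_goals
    simp only [Pi.mul_apply, Pi.div_apply]
  · have hm1 : (1 : ℝ) ≤ m := Nat.one_le_cast.2 hm
    have hpos : 0 < (m : ℝ) + α + β + 1 := by linarith
    have h₁ := (Real.Gamma_pos_of_pos hpos).ne'
    rw [jacobiNormSq_eq_of_pos hα hβ hm, Real.rpow_add_one two_ne_zero, ← add_assoc (m : ℝ),
      ← add_assoc (m : ℝ), Real.Gamma_add_one hpos.ne',
      show (m : ℝ) + (α + β + 1) / 2 = (2 * m + α + β + 1) / 2 by ring]
    field_simp
  · have hm0 : (0 : ℝ) < m := Nat.cast_pos.2 hm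
    have h₁ := (Real.rpow_pos_of_pos hm0 α).ne'
    have h₂ := (Real.rpow_pos_of_pos hm0 β).ne'
    rw [Real.rpow_add_one hm0.ne', Real.rpow_add hm0]
    field_simp

theorem jacobiCoeff_nonneg (hα : -1 < α) (hβ : -1 < β) (m i : ℕ) :
    0 ≤ jacobiCoeff α β m i := by
  rcases lt_or_ge m i with h | h
  · exact (jacobiCoeff_eq_zero α β h).ge
  have hasc : 0 ≤ (ascPochhammer ℝ i).eval (m + α + β + 1) := by
    rcases i.eq_zero_or_pos with rfl | hi
    · simp
    · have : (1 : ℝ) ≤ m := Nat.one_le_cast.2 (hi.trans_le h)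
      exact (ascPochhammer_pos i _ (by linarith)).le
  have hΓ := Real.Gamma_pos_of_pos (show 0 < (m : ℝ) + α + 1 by linarith [m.cast_nonneg (α := ℝ)])
  have := besselCoeff_pos hα i
  rw [jacobiCoeff]
  positivity

theorem jacobiNormSq_nonneg (α β : ℝ) (m : ℕ) : 0 ≤ jacobiNormSq α β m :=
  intervalIntegral.integral_nonneg (by norm_num) fun x hx =>
    mul_nonneg (mul_nonneg (sq_nonneg _) (Real.rpow_nonneg (sub_nonneg.2 hx.2) α))
      (Real.rpow_nonneg (by linarith [hx.1]) β)

end JacobiAsymptotics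

section KernelAsymptotics

open Asymptotics

variable {α β : ℝ}

theorem kernK_one_eq (α β : ℝ) (j k n : ℕ) (y : ℝ) :
    kernK α β j k n 1 y = (derivative^[k] (kernKPoly α β j n)).eval y := by
  rw [kernK, kernKPoly, iterate_derivative_sum, eval_finsetSum]
  refine Finset.sum_congr rfl fun i _ => ?_
  rw [iterate_derivative_C_mul, eval_C_mul]
  ring

theorem coeffAtOne_kernKPoly (hα : -1 < α) (hβ : -1 < β) (j n i : ℕ) :
    coeffAtOne i (kernKPoly α β j n) = ∑ m ∈ Finset.range (n + 1),
      j.factorial / 2 ^ j * jacobiCoeff α β m j / jacobiNormSq α β m * jacobiCoeff α β m i := by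
  rw [kernKPoly, map_sum]
  refine Finset.sum_congr rfl fun m _ => ?_
  rw [coeffAtOne_C_mul, eval_one_iterate_derivative, coeffAtOne_jacobiP hα hβ,
    coeffAtOne_jacobiP hα hβ]

theorem coeffAtOne_kernKPoly_isEquivalent (hα : -1 < α) (hβ : -1 < β) (j i : ℕ) :
    (fun n => coeffAtOne i (kernKPoly α β j (n - 1))) ~[atTop] fun n : ℕ =>
      j.factorial / 2 ^ j * besselCoeff α j * besselCoeff α i / 2 ^ (α + β) /
        (2 * (α + j + i + 1)) * (n : ℝ) ^ (2 * (α + j + i + 1)) := by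
  have hj := besselCoeff_pos hα j
  have hi := besselCoeff_pos hα i
  have hterm : (fun m => j.factorial / 2 ^ j * jacobiCoeff α β m j / jacobiNormSq α β m *
      jacobiCoeff α β m i) ~[atTop] fun m : ℕ => j.factorial / 2 ^ j * besselCoeff α j *
        besselCoeff α i / 2 ^ (α + β) * (m : ℝ) ^ (2 * (α + j + i) + 1) := by
    refine ((((IsEquivalent.refl (u := fun _ => (j.factorial / 2 ^ j : ℝ))).mul
      (jacobiCoeff_isEquivalent hα β j)).div (jacobiNormSq_isEquivalent hα hβ)).mul
        (jacobiCoeff_isEquivalent hα β i)).congr_right ?_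
    filter_upwards [eventually_gt_atTop 0] with m hm
    have hm0 : (0 : ℝ) < m := Nat.cast_pos.2 hm
    simp only [Pi.mul_apply, Pi.div_apply]
    rw [show 2 * (α + j + i) + 1 = 2 * j + α + (2 * i + α) + 1 by ring,
      Real.rpow_add_one hm0.ne', Real.rpow_add hm0 (2 * j + α)]
    field_simp
  have hexp : -1 < 2 * (α + j + i) + 1 := by
    linarith [j.cast_nonneg (α := ℝ), i.cast_nonneg (α := ℝ)]
  have h := sum_range_isEquivalent_rpow (by positivity) hexp hterm
  rw [show 2 * (α + j + i) + 1 + 1 = 2 * (α + j + i + 1) by ring] at h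
  refine h.congr_left ?_
  filter_upwards [eventually_gt_atTop 0] with n hn
  rw [coeffAtOne_kernKPoly hα hβ, Nat.sub_add_cancel hn]

end KernelAsymptotics

section SobolevCoefficients

open Asymptotics

variable {α β : ℝ} {j : ℕ} {Ms : ℕ → ℝ}

/-- The multiplier of `K_{n-1}^{(j,0)}(1, ·)` in the Jacobi–Sobolev polynomial `Q_n`. -/
noncomputable def sobFactor (α β : ℝ) (j : ℕ) (Ms : ℕ → ℝ) (n : ℕ) : ℝ :=
  Ms n * (derivative^[j] (jacobiP α β n)).eval 1 / (1 + Ms n * kernK α β j j (n - 1) 1 1)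

theorem coeffAtOne_sobQ (hα : -1 < α) (hβ : -1 < β) (j : ℕ) (Ms : ℕ → ℝ) (n i : ℕ) :
    coeffAtOne i (sobQ α β j Ms n) = jacobiCoeff α β n i -
      sobFactor α β j Ms n * coeffAtOne i (kernKPoly α β j (n - 1)) := by
  rw [sobQ, map_sub, coeffAtOne_C_mul, coeffAtOne_jacobiP hα hβ, sobFactor]

theorem tendsto_mul_kernK_one_one (hα : -1 < α) (hβ : -1 < β)
    (hMs : Tendsto (fun n : ℕ => Ms n * (n : ℝ) ^ (2 * (α + 2 * j + 1))) atTop atTop) :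
    Tendsto (fun n => Ms n * kernK α β j j (n - 1) 1 1) atTop atTop := by
  have hj := besselCoeff_pos hα j
  have hden : 0 < 2 * (α + j + j + 1) := by linarith [j.cast_nonneg (α := ℝ)]
  have hM : Ms ~[atTop] Ms := IsEquivalent.refl
  refine ((hM.mul ((IsEquivalent.refl (u := fun _ => (j.factorial / 2 ^ j : ℝ))).mul
    (coeffAtOne_kernKPoly_isEquivalent hα hβ j j))).symm.tendsto_atTop
      ((hMs.const_mul_atTop (r := j.factorial / 2 ^ j * (j.factorial / 2 ^ j * besselCoeff α j *
        besselCoeff α j / 2 ^ (α + β) / (2 * (α + j + j + 1)))) (by positivity)).congr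
          fun n => ?_)).congr fun n => ?_
  · simp only [Pi.mul_apply]
    rw [show α + 2 * (j : ℝ) + 1 = α + j + j + 1 by ring]
    ring
  · simp only [Pi.mul_apply]
    rw [kernK_one_eq, eval_one_iterate_derivative]

theorem sobFactor_mul_coeffAtOne_kernKPoly_isEquivalent (hα : -1 < α) (hβ : -1 < β)
    (hMs : Tendsto (fun n : ℕ => Ms n * (n : ℝ) ^ (2 * (α + 2 * j + 1))) atTop atTop) (i : ℕ) :
    (fun n => sobFactor α β j Ms n * coeffAtOne i (kernKPoly α β j (n - 1))) ~[atTop]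
      fun n : ℕ => besselCoeff α i * ((α + 2 * j + 1) / (α + j + i + 1)) *
        (n : ℝ) ^ (2 * i + α) := by
  have hMK := tendsto_mul_kernK_one_one hα hβ hMs
  have hκj := coeffAtOne_kernKPoly_isEquivalent hα hβ j j
  have hκi := coeffAtOne_kernKPoly_isEquivalent hα hβ j i
  -- The mass cancels: the multiplier behaves like the quotient of the coefficients of order `j`.
  have hfactor : sobFactor α β j Ms ~[atTop] fun n =>
      jacobiCoeff α β n j / coeffAtOne j (kernKPoly α β j (n - 1)) := by
    have hone : (fun n => 1 + Ms n * kernK α β j j (n - 1) 1 1) ~[atTop]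
        fun n => Ms n * kernK α β j j (n - 1) 1 1 :=
      IsEquivalent.refl.const_add_of_norm_tendsto_atTop (tendsto_norm_atTop_atTop.comp hMK)
    refine ((IsEquivalent.refl (u := fun n =>
      Ms n * (derivative^[j] (jacobiP α β n)).eval 1)).div hone).congr_right ?_
    filter_upwards [hMK.eventually_gt_atTop 0] with n hn
    have hM : Ms n ≠ 0 := left_ne_zero_of_mul hn.ne'
    simp only [Pi.div_apply]
    rw [mul_div_mul_left _ _ hM, kernK_one_eq, eval_one_iterate_derivative,
      eval_one_iterate_derivative, coeffAtOne_jacobiP hα hβ, mul_div_mul_left _ _ (by positivity)]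
  refine ((hfactor.trans ((jacobiCoeff_isEquivalent hα β j).div hκj)).mul hκi).congr_right ?_
  filter_upwards [eventually_gt_atTop 0] with n hn
  have hn0 : (0 : ℝ) < n := Nat.cast_pos.2 hn
  have hj := besselCoeff_pos hα j
  have h₁ : 0 < α + j + j + 1 := by linarith [j.cast_nonneg (α := ℝ)]
  have h₂ : 0 < α + j + i + 1 := by linarith [j.cast_nonneg (α := ℝ), i.cast_nonneg (α := ℝ)]
  simp only [Pi.mul_apply, Pi.div_apply]
  have hpow_j : (n : ℝ) ^ (2 * (α + j + j + 1)) =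
      (n : ℝ) ^ (2 * j + α) * (n : ℝ) ^ (2 * j + α + 2) := by
    rw [← Real.rpow_add hn0]; ring_nf
  have hpow_i : (n : ℝ) ^ (2 * (α + j + i + 1)) =
      (n : ℝ) ^ (2 * i + α) * (n : ℝ) ^ (2 * j + α + 2) := by
    rw [← Real.rpow_add hn0]; ring_nf
  have h₃ := (Real.rpow_pos_of_pos hn0 (2 * j + α)).ne'
  have h₄ := (Real.rpow_pos_of_pos hn0 (2 * j + α + 2)).ne'
  rw [hpow_j, hpow_i, show α + 2 * (j : ℝ) + 1 = α + j + j + 1 by ring]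
  field_simp

theorem tendsto_div_of_isEquivalent_const_mul {u v : ℕ → ℝ} {c : ℝ}
    (huv : u ~[atTop] fun n => c * v n) (hv : ∀ᶠ n in atTop, v n ≠ 0) :
    Tendsto (fun n => u n / v n) atTop (nhds c) := by
  refine (huv.div (IsEquivalent.refl (u := v))).tendsto_nhds_iff.2 ?_
  refine tendsto_const_nhds.congr' ?_
  filter_upwards [hv] with n hn
  rw [Pi.div_apply, mul_div_cancel_right₀ _ hn]

theorem eventually_natCast_rpow_ne_zero (p : ℝ) : ∀ᶠ n : ℕ in atTop, (n : ℝ) ^ p ≠ 0 := by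
  filter_upwards [eventually_gt_atTop 0] with n hn
  positivity

theorem tendsto_jacobiCoeff_div_rpow (hα : -1 < α) (β : ℝ) (i : ℕ) :
    Tendsto (fun n : ℕ => jacobiCoeff α β n i / (n : ℝ) ^ (2 * i + α)) atTop
      (nhds (besselCoeff α i)) :=
  tendsto_div_of_isEquivalent_const_mul (jacobiCoeff_isEquivalent hα β i)
    (eventually_natCast_rpow_ne_zero _)

theorem tendsto_sobFactor_mul_coeffAtOne_kernKPoly_div_rpow (hα : -1 < α) (hβ : -1 < β)
    (hMs : Tendsto (fun n : ℕ => Ms n * (n : ℝ) ^ (2 * (α + 2 * j + 1))) atTop atTop) (i : ℕ) :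
    Tendsto (fun n : ℕ => sobFactor α β j Ms n * coeffAtOne i (kernKPoly α β j (n - 1)) /
      (n : ℝ) ^ (2 * i + α)) atTop
        (nhds (besselCoeff α i * ((α + 2 * j + 1) / (α + j + i + 1)))) :=
  tendsto_div_of_isEquivalent_const_mul
    (sobFactor_mul_coeffAtOne_kernKPoly_isEquivalent hα hβ hMs i)
    (eventually_natCast_rpow_ne_zero _)

theorem tendsto_coeffAtOne_sobQ_div_rpow (hα : -1 < α) (hβ : -1 < β)
    (hMs : Tendsto (fun n : ℕ => Ms n * (n : ℝ) ^ (2 * (α + 2 * j + 1))) atTop atTop) (i : ℕ) :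
    Tendsto (fun n : ℕ => coeffAtOne i (sobQ α β j Ms n) / (n : ℝ) ^ (2 * i + α)) atTop
      (nhds (besselCoeff α i * ((i - j) / (α + j + i + 1)))) := by
  have hden : α + j + i + 1 ≠ 0 := by
    linarith [j.cast_nonneg (α := ℝ), i.cast_nonneg (α := ℝ)]
  have hlim : besselCoeff α i - besselCoeff α i * ((α + 2 * j + 1) / (α + j + i + 1)) =
      besselCoeff α i * ((i - j) / (α + j + i + 1)) := by
    field_simp
    ring
  refine hlim ▸ ((tendsto_jacobiCoeff_div_rpow hα β i).sub
    (tendsto_sobFactor_mul_coeffAtOne_kernKPoly_div_rpow hα hβ hMs i)).congr fun n => ?_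
  rw [coeffAtOne_sobQ hα hβ, sub_div]

end SobolevCoefficients

section CoefficientBounds

variable {α β : ℝ}

theorem ascPochhammer_eval_natCast_add_le (c : ℝ) {m i : ℕ} (hi : i ≤ m)
    (hpos : 0 ≤ (m : ℝ) + c) :
    (ascPochhammer ℝ i).eval (m + c) ≤ ((2 + |c|) * m) ^ i := by
  rw [ascPochhammer_eval_eq_prod_range]
  refine (Finset.prod_le_prod (fun l _ => by positivity) fun l hl => ?_).trans
    (Finset.prod_const (s := Finset.range i) ((2 + |c|) * (m : ℝ))).le |>.trans_eq (by simp)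
  have hlm : l < m := (Finset.mem_range.1 hl).trans_le hi
  have hl' : (l : ℝ) ≤ m := Nat.cast_le.2 hlm.le
  have hm : (1 : ℝ) ≤ m := Nat.one_le_cast.2 (Nat.zero_lt_of_lt hlm)
  nlinarith [le_abs_self c, abs_nonneg c]

theorem jacobiCoeff_zero_right (α β : ℝ) (m : ℕ) :
    jacobiCoeff α β m 0 = Real.Gamma (m + α + 1) / m.factorial * besselCoeff α 0 := by
  simp [jacobiCoeff]

theorem jacobiCoeff_le (hα : -1 < α) (hβ : -1 < β) (m i : ℕ) :
    jacobiCoeff α β m i ≤ ((2 + |α + β + 1|) * m ^ 2) ^ i *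
      (besselCoeff α i / besselCoeff α 0) * jacobiCoeff α β m 0 := by
  have h0 := besselCoeff_pos hα 0
  have hi0 := besselCoeff_pos hα i
  rcases lt_or_ge m i with h | h
  · rw [jacobiCoeff_eq_zero α β h]
    have := jacobiCoeff_nonneg hα hβ m 0
    positivity
  rcases m.eq_zero_or_pos with rfl | hm
  · obtain rfl : i = 0 := Nat.le_zero.1 h
    rw [pow_zero, one_mul, div_self h0.ne', one_mul]
  have hm1 : (1 : ℝ) ≤ m := Nat.one_le_cast.2 hm
  have hΓ := Real.Gamma_pos_of_pos (show 0 < (m : ℝ) + α + 1 by linarith)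
  have hdesc : (m.descFactorial i : ℝ) ≤ (m : ℝ) ^ i :=
    mod_cast m.descFactorial_le_pow i
  have hasc := ascPochhammer_eval_natCast_add_le (α + β + 1) h (by linarith)
  simp only [← add_assoc] at hasc
  calc jacobiCoeff α β m i
      ≤ Real.Gamma (m + α + 1) / m.factorial * m ^ i * ((2 + |α + β + 1|) * m) ^ i *
          besselCoeff α i := by
        rw [jacobiCoeff]
        have : 0 ≤ (ascPochhammer ℝ i).eval ((m : ℝ) + α + β + 1) :=
          (ascPochhammer_pos i _ (by linarith)).le
        gcongr
    _ = _ := by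
        rw [jacobiCoeff_zero_right, mul_pow, mul_pow, ← pow_mul, mul_comm 2 i, pow_mul]
        field_simp

theorem coeffAtOne_kernKPoly_nonneg (hα : -1 < α) (hβ : -1 < β) (j n i : ℕ) :
    0 ≤ coeffAtOne i (kernKPoly α β j n) := by
  rw [coeffAtOne_kernKPoly hα hβ]
  refine Finset.sum_nonneg fun m _ => ?_
  have h₁ := jacobiCoeff_nonneg hα hβ m
  have h₂ := jacobiNormSq_nonneg α β m
  have := h₁ i
  have := h₁ j
  positivity

theorem coeffAtOne_kernKPoly_le (hα : -1 < α) (hβ : -1 < β) (j n i : ℕ) :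
    coeffAtOne i (kernKPoly α β j n) ≤ ((2 + |α + β + 1|) * n ^ 2) ^ i *
      (besselCoeff α i / besselCoeff α 0) * coeffAtOne 0 (kernKPoly α β j n) := by
  have hi0 := besselCoeff_pos hα i
  have h0 := besselCoeff_pos hα 0
  rw [coeffAtOne_kernKPoly hα hβ, coeffAtOne_kernKPoly hα hβ, Finset.mul_sum]
  refine Finset.sum_le_sum fun m hm => ?_
  have hmn : (m : ℝ) ≤ n := Nat.cast_le.2 (Nat.lt_succ_iff.1 (Finset.mem_range.1 hm))
  have hm0 := jacobiCoeff_nonneg hα hβ m 0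
  have hweight : 0 ≤ j.factorial / 2 ^ j * jacobiCoeff α β m j / jacobiNormSq α β m := by
    have := jacobiCoeff_nonneg hα hβ m j
    have := jacobiNormSq_nonneg α β m
    positivity
  rw [mul_left_comm]
  gcongr
  exact (jacobiCoeff_le hα hβ m i).trans (by gcongr)

theorem abs_coeffAtOne_sobQ_le (hα : -1 < α) (hβ : -1 < β) (j : ℕ) (Ms : ℕ → ℝ) (n i : ℕ) :
    |coeffAtOne i (sobQ α β j Ms n)| ≤ ((2 + |α + β + 1|) * n ^ 2) ^ i *
      (besselCoeff α i / besselCoeff α 0) * (jacobiCoeff α β n 0 +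
        |sobFactor α β j Ms n * coeffAtOne 0 (kernKPoly α β j (n - 1))|) := by
  have hi0 := besselCoeff_pos hα i
  have h0 := besselCoeff_pos hα 0
  have hκ := coeffAtOne_kernKPoly_nonneg hα hβ j (n - 1)
  have hκ_le : coeffAtOne i (kernKPoly α β j (n - 1)) ≤ ((2 + |α + β + 1|) * n ^ 2) ^ i *
      (besselCoeff α i / besselCoeff α 0) * coeffAtOne 0 (kernKPoly α β j (n - 1)) := by
    have := hκ 0
    have : ((n - 1 : ℕ) : ℝ) ≤ n := Nat.cast_le.2 (n.sub_le 1)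
    refine (coeffAtOne_kernKPoly_le hα hβ j (n - 1) i).trans ?_
    gcongr
  rw [coeffAtOne_sobQ hα hβ]
  refine (abs_sub _ _).trans ?_
  rw [abs_mul, abs_mul, abs_of_nonneg (hκ i), abs_of_nonneg (hκ 0),
    abs_of_nonneg (jacobiCoeff_nonneg hα hβ n i), mul_add,
    mul_left_comm _ |sobFactor α β j Ms n|]
  gcongr
  exact jacobiCoeff_le hα hβ n i

theorem exists_abs_coeffAtOne_sobQ_div_rpow_le {j : ℕ} {Ms : ℕ → ℝ} (hα : -1 < α) (hβ : -1 < β)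
    (hMs : Tendsto (fun n : ℕ => Ms n * (n : ℝ) ^ (2 * (α + 2 * j + 1))) atTop atTop) :
    ∃ B, ∀ᶠ n : ℕ in atTop, ∀ i : ℕ,
      |coeffAtOne i (sobQ α β j Ms n) / (n : ℝ) ^ (2 * i + α)| ≤
        B * ((2 + |α + β + 1|) ^ i * besselCoeff α i) := by
  have h0 := besselCoeff_pos hα 0
  have hlim := (tendsto_jacobiCoeff_div_rpow hα β 0).add
    (tendsto_sobFactor_mul_coeffAtOne_kernKPoly_div_rpow hα hβ hMs 0).abs
  obtain ⟨B, hB⟩ := hlim.isBoundedUnder_le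
  refine ⟨B / besselCoeff α 0, ?_⟩
  filter_upwards [eventually_map.1 hB, eventually_gt_atTop 0] with n hn hpos i
  have hn0 : (0 : ℝ) < n := Nat.cast_pos.2 hpos
  have hi := besselCoeff_pos hα i
  have hα_pow : 0 < (n : ℝ) ^ α := Real.rpow_pos_of_pos hn0 α
  simp only [Nat.cast_zero, mul_zero, zero_add, abs_div, abs_of_pos hα_pow, ← add_div] at hn
  rw [div_le_iff₀ hα_pow] at hn
  rw [natCast_rpow_two_mul_add hpos, abs_div,
    abs_of_pos (show 0 < ((n : ℝ) ^ 2) ^ i * (n : ℝ) ^ α by positivity),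
    div_le_iff₀ (by positivity)]
  refine (abs_coeffAtOne_sobQ_le hα hβ j Ms n i).trans
    ((mul_le_mul_of_nonneg_left hn (by positivity)).trans_eq ?_)
  rw [mul_pow]
  ring

end CoefficientBounds

section BesselSeries

variable {ν : ℝ}

theorem besselCoeff_succ (hν : -1 < ν) (i : ℕ) :
    besselCoeff ν (i + 1) = besselCoeff ν i * (1 / ((i : ℝ) + 1) * (ν + 1 + i)⁻¹) := by
  have hpos : 0 < ν + i + 1 := by linarith [i.cast_nonneg (α := ℝ)]
  have hΓ := (Real.Gamma_pos_of_pos hpos).ne'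
  rw [besselCoeff, besselCoeff, Nat.factorial_succ,
    show ν + ((i + 1 : ℕ) : ℝ) + 1 = ν + i + 1 + 1 by push_cast; ring,
    Real.Gamma_add_one hpos.ne', show ν + 1 + i = ν + i + 1 by ring]
  push_cast
  field_simp

theorem summable_pow_mul_besselCoeff (hν : -1 < ν) (ρ : ℝ) :
    Summable fun i => ρ ^ i * besselCoeff ν i := by
  rcases eq_or_ne ρ 0 with rfl | hρ
  · exact summable_of_ne_finset_zero (s := {0}) fun i hi => by
      rw [zero_pow (by simpa using hi), zero_mul]
  have hne : ∀ i, ρ ^ i * besselCoeff ν i ≠ 0 := fun i =>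
    mul_ne_zero (pow_ne_zero i hρ) (besselCoeff_pos hν i).ne'
  have hratio : Tendsto (fun i : ℕ => ρ * (1 / ((i : ℝ) + 1) * (ν + 1 + i)⁻¹)) atTop (nhds 0) := by
    have hinv : Tendsto (fun i : ℕ => (ν + 1 + i)⁻¹) atTop (nhds 0) :=
      (tendsto_atTop_add_const_left _ _ tendsto_natCast_atTop_atTop).inv_tendsto_atTop
    simpa using (tendsto_one_div_add_atTop_nhds_zero_nat.mul hinv).const_mul ρ
  refine summable_of_ratio_test_tendsto_lt_one zero_lt_one (Eventually.of_forall hne)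
    (norm_zero (E := ℝ) ▸ hratio.norm.congr fun i => ?_)
  rw [← norm_div, besselCoeff_succ hν, pow_succ]
  have := (besselCoeff_pos hν i).ne'
  congr 1
  field_simp

theorem hasSum_besselG (hν : -1 < ν) (z : ℂ) :
    HasSum (fun i => (besselCoeff ν i : ℂ) * (-(z / 2) ^ 2) ^ i) (besselG ν z) := by
  have hsum : Summable fun i => (besselCoeff ν i : ℂ) * (-(z / 2) ^ 2) ^ i := by
    refine .of_norm ((summable_pow_mul_besselCoeff hν ‖-(z / 2) ^ 2‖).congr fun i => ?_)
    rw [norm_mul, norm_pow, Complex.norm_real, Real.norm_of_nonneg (besselCoeff_pos hν i).le,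
      mul_comm]
  have hG : besselG ν z = ∑' i, (besselCoeff ν i : ℂ) * (-(z / 2) ^ 2) ^ i := by
    refine tsum_congr fun i => ?_
    have hΓ : Complex.Gamma (i + ν + 1) = (Real.Gamma (ν + i + 1) : ℂ) := by
      rw [← Complex.Gamma_ofReal]
      push_cast
      ring_nf
    rw [hΓ, besselCoeff, neg_pow ((z / 2) ^ 2), ← pow_mul]
    push_cast
    ring
  exact hG ▸ hsum.hasSum

theorem besselCoeff_add_mul_descFactorial {α : ℝ} (hα : -1 < α) (k l : ℕ) :
    besselCoeff α (l + k) *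
      ((l + k).descFactorial k / (ascPochhammer ℝ k).eval (α + 1 + (l + k : ℕ))) =
        besselCoeff (α + 2 * k) l := by
  have hpos : 0 < α + 1 + (l + k : ℕ) := by linarith [(l + k).cast_nonneg (α := ℝ)]
  have hΓ := (Real.Gamma_pos_of_pos hpos).ne'
  have hasc := (ascPochhammer_pos k _ hpos).ne'
  have hfact : ((l + k).factorial : ℝ) = l.factorial * (l + k).descFactorial k := by
    have h := Nat.factorial_mul_descFactorial (Nat.le_add_left k l)
    rw [Nat.add_sub_cancel] at h
    exact_mod_cast h.symm
  have hdesc : ((l + k).descFactorial k : ℝ) ≠ 0 :=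
    right_ne_zero_of_mul (hfact ▸ Nat.cast_ne_zero.2 (l + k).factorial_ne_zero)
  rw [besselCoeff, besselCoeff, hfact, add_right_comm α,
    show α + 2 * k + l + 1 = α + 1 + (l + k : ℕ) + k by push_cast; ring,
    gamma_add_natCast hpos]
  field_simp

theorem hasSum_pow_mul_besselG_add_two_mul {α : ℝ} (hα : -1 < α) (k : ℕ) (z : ℂ) :
    HasSum (fun i : ℕ => ((besselCoeff α i *
        ((-1) ^ k * i.descFactorial k / (ascPochhammer ℝ k).eval (α + 1 + i)) : ℝ) : ℂ) *
          (-(z / 2) ^ 2) ^ i)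
      ((z / 2) ^ (2 * k) * besselG (α + 2 * k) z) := by
  have hν : -1 < α + 2 * k := by linarith [k.cast_nonneg (α := ℝ)]
  rw [← hasSum_nat_add_iff' k, Finset.sum_eq_zero fun i hi => by
    simp [Nat.descFactorial_of_lt (Finset.mem_range.1 hi)], sub_zero]
  refine ((hasSum_besselG hν z).mul_left ((z / 2) ^ (2 * k))).congr_fun fun l => ?_
  have hsign : (-1 : ℂ) ^ (k * 2) = 1 := (even_two.mul_left k).neg_one_pow
  rw [← besselCoeff_add_mul_descFactorial hα, pow_add, neg_pow ((z / 2) ^ 2) k, ← pow_mul]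
  push_cast
  ring_nf
  rw [hsign, mul_one]

end BesselSeries

section Tannery

theorem tendstoUniformlyOn_of_hasSum_mul_pow {ι X 𝕜 : Type*} [NormedField 𝕜]
    {l : Filter ι} [l.NeBot] {a : ι → ℕ → 𝕜} {b : ℕ → 𝕜} {F : ι → X → 𝕜} {f φ : X → 𝕜}
    {S : Set X} {r : ℕ → ℝ} {ρ : ℝ} (hρ : 0 ≤ ρ) (hφ : ∀ x ∈ S, ‖φ x‖ ≤ ρ)
    (hr : Summable fun i => r i * ρ ^ i) (har : ∀ᶠ n in l, ∀ i, ‖a n i‖ ≤ r i)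
    (hab : ∀ i, Tendsto (a · i) l (nhds (b i)))
    (hF : ∀ᶠ n in l, ∀ x ∈ S, HasSum (fun i => a n i * φ x ^ i) (F n x))
    (hf : ∀ x ∈ S, HasSum (fun i => b i * φ x ^ i) (f x)) :
    TendstoUniformlyOn F f l S := by
  have hbr : ∀ i, ‖b i‖ ≤ r i := fun i =>
    le_of_tendsto (hab i).norm (har.mono fun n hn => hn i)
  have hbound : Summable fun i => 2 * r i * ρ ^ i := by
    simpa only [mul_assoc] using hr.mul_left 2
  have hdom : ∀ᶠ n in l, ∀ i, ‖‖b i - a n i‖ * ρ ^ i‖ ≤ 2 * r i * ρ ^ i := by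
    filter_upwards [har] with n hn i
    rw [Real.norm_of_nonneg (by positivity)]
    have := (norm_sub_le (b i) (a n i)).trans (add_le_add (hbr i) (hn i))
    gcongr
    linarith
  have hlim : Tendsto (fun n => ∑' i, ‖b i - a n i‖ * ρ ^ i) l (nhds 0) := by
    rw [← tsum_zero (α := ℝ) (β := ℕ)]
    refine tendsto_tsum_of_dominated_convergence hbound (fun i => ?_) hdom
    simpa using ((hab i).const_sub (b i)).norm.mul_const (ρ ^ i)
  rw [Metric.tendstoUniformlyOn_iff]
  intro ε hε
  filter_upwards [hlim.eventually_lt_const hε, hdom, hF] with n hn hdomn hFn x hx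
  refine lt_of_le_of_lt ?_ hn
  have hdiff := (hf x hx).sub (hFn x hx)
  rw [dist_eq_norm, ← hdiff.tsum_eq]
  refine tsum_of_norm_bounded (Summable.of_norm_bounded hbound hdomn).hasSum fun i => ?_
  rw [← sub_mul, norm_mul, norm_pow]
  have := hφ x hx
  gcongr

end Tannery

section Interpolation

theorem ascPochhammer_eval_mul_eval_add {S : Type*} [CommSemiring S] (x : S) {k N : ℕ}
    (h : k ≤ N) :
    (ascPochhammer S k).eval x * (ascPochhammer S (N - k)).eval (x + k) =
      (ascPochhammer S N).eval x := by
  rw [← Nat.add_sub_cancel' h, ← ascPochhammer_mul, Nat.add_sub_cancel_left]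
  simp

theorem sum_mul_descFactorial_div_ascPochhammer {a : ℝ} (ha : 0 < a) {N : ℕ} {c : ℕ → ℝ}
    {R : ℝ[X]} (hR : R.natDegree ≤ N)
    (h : ∀ i ≤ N, ∑ k ∈ Finset.range (N + 1),
      c k * (i.descFactorial k / (ascPochhammer ℝ k).eval (a + i)) =
        R.eval (i : ℝ) / (ascPochhammer ℝ N).eval (a + i)) (i : ℕ) :
    ∑ k ∈ Finset.range (N + 1), c k * (i.descFactorial k / (ascPochhammer ℝ k).eval (a + i)) =
      R.eval (i : ℝ) / (ascPochhammer ℝ N).eval (a + i) := by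
  -- Clearing denominators turns both sides into polynomials in `i` of degree at most `N`.
  let P : ℝ[X] := ∑ k ∈ Finset.range (N + 1),
    C (c k) * (descPochhammer ℝ k * (ascPochhammer ℝ (N - k)).comp (X + C (a + k)))
  have hasc : ∀ k i : ℕ, 0 < (ascPochhammer ℝ k).eval (a + i) := fun k i =>
    ascPochhammer_pos k _ (by positivity)
  have hP : ∀ i : ℕ, P.eval (i : ℝ) = (∑ k ∈ Finset.range (N + 1),
      c k * (i.descFactorial k / (ascPochhammer ℝ k).eval (a + i))) *
        (ascPochhammer ℝ N).eval (a + i) := fun i => by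
    rw [eval_finsetSum, Finset.sum_mul]
    refine Finset.sum_congr rfl fun k hk => ?_
    have := (hasc k i).ne'
    rw [← ascPochhammer_eval_mul_eval_add _ (Nat.lt_succ_iff.1 (Finset.mem_range.1 hk))]
    simp only [eval_mul, eval_C, descPochhammer_eval_eq_descFactorial, eval_comp, eval_add, eval_X]
    rw [show (i : ℝ) + (a + k) = a + i + k by ring]
    field_simp
  have hdeg : ∀ {p : ℝ[X]}, p.natDegree ≤ N → p.degree < (Finset.range (N + 1)).card :=
    fun hp => by
      rw [Finset.card_range]
      exact (degree_le_of_natDegree_le hp).trans_lt (by exact_mod_cast N.lt_succ_self)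
  have hPdeg : P.natDegree ≤ N := by
    refine natDegree_sum_le_of_forall_le _ _ fun k hk => (natDegree_C_mul_le _ _).trans ?_
    refine natDegree_mul_le.trans ?_
    rw [descPochhammer_natDegree, natDegree_comp, ascPochhammer_natDegree, natDegree_X_add_C]
    have := Finset.mem_range.1 hk
    omega
  have hPR : P = R := Polynomial.eq_of_degrees_lt_of_eval_index_eq (Finset.range (N + 1))
    (Nat.cast_injective (R := ℝ)).injOn (hdeg hPdeg) (hdeg hR) fun i hi => by
      rw [hP, h i (Nat.lt_succ_iff.1 (Finset.mem_range.1 hi)), div_mul_cancel₀ _ (hasc N i).ne']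
  rw [eq_div_iff (hasc N i).ne', ← hP, hPR]

end Interpolation

section MehlerHeine

variable {α β : ℝ} {j : ℕ} {Ms : ℕ → ℝ}

theorem sum_mul_descFactorial_div_ascPochhammer_of_system (hα : -1 < α) {b : ℕ → ℝ}
    (hb : ∀ i, i ≤ j + 1 →
      (∑ k ∈ Finset.range (i + 1),
          b k * (Nat.choose i k : ℝ) * (-1) ^ k * (Nat.factorial k : ℝ) * 2 ^ k *
            Real.Gamma (α + i + 1) / Real.Gamma (α + i + k + 1)) =
        ((i : ℝ) - j) / (α + j + i + 1)) (i : ℕ) :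
    ∑ k ∈ Finset.range (j + 2),
      b k * 2 ^ k * (-1) ^ k * (i.descFactorial k / (ascPochhammer ℝ k).eval (α + 1 + i)) =
        (i - j) / (α + j + i + 1) := by
  have hpos : ∀ i : ℕ, 0 < α + 1 + i := fun i => by linarith [i.cast_nonneg (α := ℝ)]
  let R : ℝ[X] := (X - C (j : ℝ)) * (ascPochhammer ℝ j).comp (X + C (α + 1))
  have hRdeg : R.natDegree ≤ j + 1 := by
    refine natDegree_mul_le.trans ?_
    rw [natDegree_comp, ascPochhammer_natDegree, natDegree_X_add_C, natDegree_X_sub_C]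
    omega
  have hR : ∀ i : ℕ, R.eval (i : ℝ) / (ascPochhammer ℝ (j + 1)).eval (α + 1 + i) =
      (i - j) / (α + j + i + 1) := fun i => by
    have := (ascPochhammer_pos j _ (hpos i)).ne'
    simp only [R, eval_mul, eval_sub, eval_X, eval_C, eval_comp, eval_add, ascPochhammer_succ_eval]
    rw [add_comm (i : ℝ), mul_comm, mul_div_mul_left _ _ this]
    ring_nf
  rw [← hR]
  refine sum_mul_descFactorial_div_ascPochhammer (by linarith) hRdeg (fun i hi => ?_) i
  have hsub : Finset.range (i + 1) ⊆ Finset.range (j + 1 + 1) :=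
    Finset.range_subset_range.2 (by omega)
  rw [hR, ← hb i hi, ← Finset.sum_subset hsub fun k _ hk => by
    rw [Nat.descFactorial_of_lt (by simpa using hk), Nat.cast_zero, zero_div, mul_zero]]
  refine Finset.sum_congr rfl fun k _ => ?_
  have h₁ := (ascPochhammer_pos k _ (hpos i)).ne'
  have h₂ := (Real.Gamma_pos_of_pos (hpos i)).ne'
  rw [add_right_comm α i 1, show α + i + k + 1 = α + 1 + i + k by ring, gamma_add_natCast (hpos i),
    Nat.descFactorial_eq_factorial_mul_choose]
  push_cast
  field_simp

theorem hasSum_sum_mul_besselG_add_two_mul (hα : -1 < α) (b : ℕ → ℝ) (N : ℕ) (z : ℂ) :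
    HasSum (fun i : ℕ => ((besselCoeff α i * ∑ k ∈ Finset.range N, b k * 2 ^ k * (-1) ^ k *
        (i.descFactorial k / (ascPochhammer ℝ k).eval (α + 1 + i)) : ℝ) : ℂ) * (-(z / 2) ^ 2) ^ i)
      (∑ k ∈ Finset.range N,
        ((b k : ℝ) : ℂ) * 2 ^ k * (z / 2) ^ (2 * k) * besselG (α + 2 * k) z) := by
  simp only [mul_assoc _ ((z / 2) ^ (2 * _))]
  refine (hasSum_sum fun k _ => (hasSum_pow_mul_besselG_add_two_mul hα k z).mul_left
    ((b k : ℂ) * 2 ^ k)).congr_fun fun i => ?_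
  rw [Finset.mul_sum]
  push_cast
  rw [Finset.sum_mul]
  refine Finset.sum_congr rfl fun k _ => ?_
  ring

theorem hasSum_coeffAtOne_sobQ_div_rpow (α β : ℝ) (j : ℕ) (Ms : ℕ → ℝ) {n : ℕ} (hn : 0 < n)
    (s : ℂ) :
    HasSum (fun i : ℕ =>
        ((coeffAtOne i (sobQ α β j Ms n) / (n : ℝ) ^ (2 * i + α) : ℝ) : ℂ) * s ^ i)
      (aeval (1 + 2 * (s / n ^ 2)) (sobQ α β j Ms n) / (((n : ℝ) ^ α : ℝ) : ℂ)) := by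
  refine ((hasSum_coeffAtOne_mul_pow (sobQ α β j Ms n) (s / n ^ 2)).div_const
    (((n : ℝ) ^ α : ℝ) : ℂ)).congr_fun fun i => ?_
  rw [natCast_rpow_two_mul_add hn]
  push_cast
  ring

theorem sobQ_mehlerHeine_small_gamma_general (hα : -1 < α) (hβ : -1 < β)
    (hMs : Tendsto (fun n : ℕ => Ms n * (n : ℝ) ^ (2 * (α + 2 * j + 1))) atTop atTop)
    {b : ℕ → ℝ}
    (hb : ∀ i, i ≤ j + 1 →
      (∑ k ∈ Finset.range (i + 1),
          b k * (Nat.choose i k : ℝ) * (-1) ^ k * (Nat.factorial k : ℝ) * 2 ^ k *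
            Real.Gamma (α + i + 1) / Real.Gamma (α + i + k + 1)) =
        ((i : ℝ) - j) / (α + j + i + 1))
    {K : Set ℂ} (hK : Bornology.IsBounded K) :
    TendstoUniformlyOn
      (fun (n : ℕ) (z : ℂ) =>
        aeval (1 - z ^ 2 / (2 * (n : ℂ) ^ 2)) (sobQ α β j Ms n) /
          (((n : ℝ) ^ α : ℝ) : ℂ))
      (fun z => ∑ i ∈ Finset.range (j + 2),
        ((b i : ℝ) : ℂ) * 2 ^ i * (z / 2) ^ (2 * i) * besselG (α + 2 * i) z)
      atTop K := by
  obtain ⟨ρ, hρ, hKρ⟩ := hK.exists_pos_norm_le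
  obtain ⟨B, hB⟩ := exists_abs_coeffAtOne_sobQ_div_rpow_le hα hβ hMs
  have hφ : ∀ z ∈ K, ‖-(z / 2) ^ 2‖ ≤ (ρ / 2) ^ 2 := fun z hz => by
    rw [norm_neg, norm_pow, norm_div, Complex.norm_ofNat]
    have := hKρ z hz
    gcongr
  refine tendstoUniformlyOn_of_hasSum_mul_pow (φ := fun z => -(z / 2) ^ 2) (by positivity) hφ
    (r := fun i => B * ((2 + |α + β + 1|) ^ i * besselCoeff α i))
    (a := fun n i => ((coeffAtOne i (sobQ α β j Ms n) / (n : ℝ) ^ (2 * i + α) : ℝ) : ℂ)) ?_ ?_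
    (fun i => (Complex.continuous_ofReal.tendsto _).comp
      (tendsto_coeffAtOne_sobQ_div_rpow hα hβ hMs i)) ?_ fun z _ => ?_
  · refine ((summable_pow_mul_besselCoeff hα ((2 + |α + β + 1|) * (ρ / 2) ^ 2)).mul_left B).congr
      fun i => ?_
    rw [mul_pow]
    ring
  · simpa only [Complex.norm_real, Real.norm_eq_abs] using hB
  · filter_upwards [eventually_gt_atTop 0] with n hn z _
    rw [show 1 - z ^ 2 / (2 * (n : ℂ) ^ 2) = 1 + 2 * (-(z / 2) ^ 2 / n ^ 2) by ring]
    exact hasSum_coeffAtOne_sobQ_div_rpow α β j Ms hn (-(z / 2) ^ 2)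
  · simpa only [sum_mul_descFactorial_div_ascPochhammer_of_system hα hb] using
      hasSum_sum_mul_besselG_add_two_mul hα b (j + 2) z

theorem tendsto_mul_rpow_atTop_of_lt {u : ℕ → ℝ} {γ δ M : ℝ} (hM : 0 < M)
    (hu : Tendsto (fun n : ℕ => u n * (n : ℝ) ^ γ) atTop (nhds M)) (hγδ : γ < δ) :
    Tendsto (fun n : ℕ => u n * (n : ℝ) ^ δ) atTop atTop := by
  have hpow : Tendsto (fun n : ℕ => (n : ℝ) ^ (δ - γ)) atTop atTop :=
    (tendsto_rpow_atTop (sub_pos.2 hγδ)).comp tendsto_natCast_atTop_atTop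
  refine (hu.pos_mul_atTop hM hpow).congr' ?_
  filter_upwards [eventually_gt_atTop 0] with n hn
  rw [mul_assoc, ← Real.rpow_add (Nat.cast_pos.2 hn), add_sub_cancel]

end MehlerHeine

/-- Mehler–Heine formula for `Q_n` when `γ < 2(α+2j+1)`. -/
theorem sobQ_mehlerHeine_small_gamma (α β : ℝ) (hα : -1 < α) (hβ : -1 < β) (j : ℕ)
    (γ M : ℝ) (hM : 0 < M) (Ms : ℕ → ℝ) (hMs : ∀ n, 0 ≤ Ms n)
    (hlim : Filter.Tendsto (fun n : ℕ => Ms n * (n : ℝ) ^ γ) Filter.atTop (nhds M))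
    (hγ : γ < 2 * (α + 2 * j + 1)) (b : ℕ → ℝ)
    (hb : ∀ i, i ≤ j + 1 →
      (∑ k ∈ Finset.range (i + 1),
          b k * (Nat.choose i k : ℝ) * (-1) ^ k * (Nat.factorial k : ℝ) * 2 ^ k *
            Real.Gamma (α + i + 1) / Real.Gamma (α + i + k + 1)) =
        ((i : ℝ) - j) / (α + j + i + 1))
    (K : Set ℂ) (hK : IsCompact K) :
    TendstoUniformlyOn
      (fun (n : ℕ) (z : ℂ) =>
        Polynomial.aeval (1 - z ^ 2 / (2 * (n : ℂ) ^ 2)) (sobQ α β j Ms n) /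
          (((n : ℝ) ^ α : ℝ) : ℂ))
      (fun z => ∑ i ∈ Finset.range (j + 2),
        ((b i : ℝ) : ℂ) * 2 ^ i * (z / 2) ^ (2 * i) * besselG (α + 2 * i) z)
      Filter.atTop K := by
  exact sobQ_mehlerHeine_small_gamma_general hα hβ (tendsto_mul_rpow_atTop_of_lt hM hlim hγ) hb
    hK.isBounded
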